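/- Fix an integer k ≥ 1. Let U^{(1),k}_0(Ω∞) be the set of functions Ω∞° → ℝ³ of the form u = ( y(1−y)z·q₁, x(1−x)z·q₂, x(1−x)y(1−y)·q₃ ) + (z^{k−1}/(1+z)^{k+1})·( z·∂r/∂x, z·∂r/∂y, −r ), where q₁ ∈ Q^{k−1,k−2,k−2}_{k+1}, q₂ ∈ Q^{k−2,k−1,k−2}_{k+1}, q₃ ∈ Q^{k−2,k−2,k−2}_{k+1}, and r = x(1−x)y(1−y)ρ with ρ ∈ Q^{k−2,k−2}[x,y]. Then every u ∈ U^{(1),k}_0(Ω∞) can be written, uniquely, as u = ∇q + w on Ω∞°, where q = x(1−x)y(1−y)z·v for some v ∈ Q^{k−2,k−2,k−2}_k (i.e. q ∈ U^{(0),k}_0(Ω∞)) and w ∈ U^{(1),k}_{0,curl}(Ω∞). -/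

import Mathlib

noncomputable section

/-- The interior `Ω∞° = (0,1) × (0,1) × (0,∞)` of the infinite pyramid. -/
def PyrInfInt : Set (ℝ × ℝ × ℝ) :=
  {p | 0 < p.1 ∧ p.1 < 1 ∧ 0 < p.2.1 ∧ p.2.1 < 1 ∧ 0 < p.2.2}

/-- The weighted monomial `x^a y^b z^c / (1+z)^k`. -/
def qmon (k a b c : ℕ) : ℝ × ℝ × ℝ → ℝ :=
  fun p => p.1 ^ a * p.2.1 ^ b * p.2.2 ^ c / (1 + p.2.2) ^ k

/-- The space `Q^{l,m,n}_k`. -/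
def Qsp (l m n : ℤ) (k : ℕ) : Submodule ℝ ((ℝ × ℝ × ℝ) → ℝ) :=
  Submodule.span ℝ
    {f | ∃ a b c : ℕ, (a : ℤ) ≤ l ∧ (b : ℤ) ≤ m ∧ (c : ℤ) ≤ n ∧ f = qmon k a b c}

/-- The gradient of a scalar field at a point, as a vector in `ℝ³`. -/
def grad3 (f : ℝ × ℝ × ℝ → ℝ) (p : ℝ × ℝ × ℝ) : ℝ × ℝ × ℝ :=
  (fderiv ℝ f p ((1 : ℝ), (0 : ℝ), (0 : ℝ)),
   fderiv ℝ f p ((0 : ℝ), (1 : ℝ), (0 : ℝ)),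
   fderiv ℝ f p ((0 : ℝ), (0 : ℝ), (1 : ℝ)))

/-- `x(1−x)y(1−y)·ρ` as a polynomial in two variables. -/
def bub2 (ρ : MvPolynomial (Fin 2) ℝ) : MvPolynomial (Fin 2) ℝ :=
  MvPolynomial.X 0 * (1 - MvPolynomial.X 0) * MvPolynomial.X 1 * (1 - MvPolynomial.X 1) * ρ

/-- The special field `(z^{k−1}/(1+z)^{k+1})·(z·∂R/∂x, z·∂R/∂y, −R)`. -/
def specialGrad (k : ℕ) (R : MvPolynomial (Fin 2) ℝ) : ℝ × ℝ × ℝ → ℝ × ℝ × ℝ :=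
  fun p =>
    (p.2.2 ^ (k - 1) / (1 + p.2.2) ^ (k + 1) *
       (p.2.2 * MvPolynomial.eval ![p.1, p.2.1] (MvPolynomial.pderiv 0 R)),
     p.2.2 ^ (k - 1) / (1 + p.2.2) ^ (k + 1) *
       (p.2.2 * MvPolynomial.eval ![p.1, p.2.1] (MvPolynomial.pderiv 1 R)),
     -(p.2.2 ^ (k - 1) / (1 + p.2.2) ^ (k + 1) * MvPolynomial.eval ![p.1, p.2.1] R))

/-- The generic element of `U^{(1),k}_0(Ω∞)` determined by `q₁, q₂, q₃` and `ρ`: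
`(y(1−y)z·q₁, x(1−x)z·q₂, x(1−x)y(1−y)·q₃) + (z^{k−1}/(1+z)^{k+1})·(z·rₓ, z·r_y, −r)`
where `r = x(1−x)y(1−y)ρ`. -/
def U1zeroFun (k : ℕ) (q₁ q₂ q₃ : (ℝ × ℝ × ℝ) → ℝ) (ρ : MvPolynomial (Fin 2) ℝ) :
    ℝ × ℝ × ℝ → ℝ × ℝ × ℝ :=
  fun p =>
    (p.2.1 * (1 - p.2.1) * p.2.2 * q₁ p,
     p.1 * (1 - p.1) * p.2.2 * q₂ p,
     p.1 * (1 - p.1) * p.2.1 * (1 - p.2.1) * q₃ p) + specialGrad k (bub2 ρ) p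

/-- The `H¹` bubble `x(1−x)y(1−y)z·v`. -/
def bubQ (v : (ℝ × ℝ × ℝ) → ℝ) : (ℝ × ℝ × ℝ) → ℝ :=
  fun p => p.1 * (1 - p.1) * p.2.1 * (1 - p.2.1) * p.2.2 * v p

/-- The generic element of `U^{(1),k}_{0,curl}(Ω∞)`. -/
def U1curlFun (k : ℕ) (p₁ p₂ : MvPolynomial (Fin 3) ℝ) (ρ : MvPolynomial (Fin 2) ℝ) :
    ℝ × ℝ × ℝ → ℝ × ℝ × ℝ :=
  fun p =>
    ((p.2.1 * (1 - p.2.1) * p.2.2 * MvPolynomial.eval ![p.1, p.2.1, p.2.2] p₁) /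
        (1 + p.2.2) ^ (k + 1),
     (p.1 * (1 - p.1) * p.2.2 * MvPolynomial.eval ![p.1, p.2.1, p.2.2] p₂) /
        (1 + p.2.2) ^ (k + 1),
     (p.1 * (1 - p.1) * p.2.1 * (1 - p.2.1) * MvPolynomial.eval ![p.1, p.2.1] ρ) /
        (1 + p.2.2) ^ (k + 1))

/-- Degree constraints for `U^{(1),k}_{0,curl}(Ω∞)` (bounds in `ℤ`). -/
def U1curlBounds (k : ℕ) (p₁ p₂ : MvPolynomial (Fin 3) ℝ)
    (ρ : MvPolynomial (Fin 2) ℝ) : Prop :=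
  (∀ d ∈ p₁.support,
    (d 0 : ℤ) ≤ (k : ℤ) - 1 ∧ (d 1 : ℤ) ≤ (k : ℤ) - 2 ∧ (d 2 : ℤ) ≤ (k : ℤ) - 2) ∧
  (∀ d ∈ p₂.support,
    (d 0 : ℤ) ≤ (k : ℤ) - 2 ∧ (d 1 : ℤ) ≤ (k : ℤ) - 1 ∧ (d 2 : ℤ) ≤ (k : ℤ) - 2) ∧
  (∀ d ∈ ρ.support, (d 0 : ℤ) ≤ (k : ℤ) - 2 ∧ (d 1 : ℤ) ≤ (k : ℤ) - 2)

/-!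
Applied to the bubble of `x^a y^b z^c/(1+z)^k`, the gradient is a sum of horizontal gradients,
which lie in the curl space as long as the degree in `z` allows it, and of the vertical field with
third component `x(1−x)y(1−y)x^a y^b ((c+1) z^c + (c+1−k) z^{c+1})/(1+z)^{k+1}`. For `c+1 < k` the
coefficient of `z^{c+1}` is nonzero, so modulo gradients and the curl space a vertical field of
degree `c+1` in `z` reduces to one of degree `c`, and eventually to degree `0`, where it belongs to
the curl space. For `c = k−2` the same identity expresses the special field with
`ρ = x^a y^b`: its horizontal part is exactly the one that has too high a degree in `z`.

For uniqueness, compare third components along a vertical line when `∇q` lies in the curl space: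
`∂_z (zP(z)/(1+z)^k) = c/(1+z)^{k+1}` with `deg P ≤ k−2`. The right-hand side is the derivative
of `−(c/k)/(1+z)^k`, so `(zP(z) + c/k)/(1+z)^k` is constant. Its numerator has degree less
than `k`, hence vanishes, and then so do `c` and `P`.
-/

open MvPolynomial

section Gradient

variable {f g : ℝ × ℝ × ℝ → ℝ} {p : ℝ × ℝ × ℝ}

theorem hasDerivAt_grad3_fst (hf : DifferentiableAt ℝ f p) :
    HasDerivAt (fun t => f (t, p.2)) (grad3 f p).1 p.1 :=
  hf.hasFDerivAt.comp_hasDerivAt p.1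
    ((hasDerivAt_id p.1).prodMk (hasDerivAt_const p.1 p.2))

theorem hasDerivAt_grad3_snd (hf : DifferentiableAt ℝ f p) :
    HasDerivAt (fun t => f (p.1, t, p.2.2)) (grad3 f p).2.1 p.2.1 :=
  hf.hasFDerivAt.comp_hasDerivAt p.2.1 ((hasDerivAt_const p.2.1 p.1).prodMk
    ((hasDerivAt_id p.2.1).prodMk (hasDerivAt_const p.2.1 p.2.2)))

theorem hasDerivAt_grad3_thd (hf : DifferentiableAt ℝ f p) :
    HasDerivAt (fun t => f (p.1, p.2.1, t)) (grad3 f p).2.2 p.2.2 :=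
  hf.hasFDerivAt.comp_hasDerivAt p.2.2 ((hasDerivAt_const p.2.2 p.1).prodMk
    ((hasDerivAt_const p.2.2 p.2.1).prodMk (hasDerivAt_id p.2.2)))

theorem grad3_eq_of_hasDerivAt {u₁ u₂ u₃ : ℝ} (hf : DifferentiableAt ℝ f p)
    (h₁ : HasDerivAt (fun t => f (t, p.2)) u₁ p.1)
    (h₂ : HasDerivAt (fun t => f (p.1, t, p.2.2)) u₂ p.2.1)
    (h₃ : HasDerivAt (fun t => f (p.1, p.2.1, t)) u₃ p.2.2) :
    grad3 f p = (u₁, u₂, u₃) :=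
  Prod.ext ((hasDerivAt_grad3_fst hf).unique h₁) (Prod.ext
    ((hasDerivAt_grad3_snd hf).unique h₂) ((hasDerivAt_grad3_thd hf).unique h₃))

theorem grad3_add (hf : DifferentiableAt ℝ f p) (hg : DifferentiableAt ℝ g p) :
    grad3 (f + g) p = grad3 f p + grad3 g p := by
  simp [grad3, fderiv_add hf hg]

theorem grad3_const_smul (hf : DifferentiableAt ℝ f p) (r : ℝ) :
    grad3 (r • f) p = r • grad3 f p := by
  simp [grad3, fderiv_const_smul hf]

theorem grad3_eq_zero_of_eqOn {s : Set (ℝ × ℝ × ℝ)} (hs : IsOpen s) (hp : p ∈ s)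
    (hf : Set.EqOn f 0 s) : grad3 f p = 0 := by
  simp [grad3, (hf.eventuallyEq_of_mem (hs.mem_nhds hp)).fderiv_eq]

end Gradient

theorem isOpen_PyrInfInt : IsOpen PyrInfInt := by
  simp only [PyrInfInt, Set.ofPred_and]
  refine .inter ?_ (.inter ?_ (.inter ?_ (.inter ?_ ?_))) <;>
    exact isOpen_lt (by fun_prop) (by fun_prop)

/-- Evaluation of polynomials at the coordinates `φ`, divided by `(1+z)^k`; with `φ` the
projection to `(x,y,z)` or to `(x,y)` this parametrizes the spaces `Q^{l,m,n}_k` and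
`Q^{l,m,0}_k`. -/
def weightedEval {σ : Type*} (φ : ℝ × ℝ × ℝ → σ → ℝ) (k : ℕ) :
    MvPolynomial σ ℝ →ₗ[ℝ] (ℝ × ℝ × ℝ → ℝ) where
  toFun P p := eval (φ p) P / (1 + p.2.2) ^ k
  map_add' P Q := by ext p; simp [add_div]
  map_smul' r P := by ext p; simp [smul_eval, mul_div_assoc]

theorem map_weightedEval_restrictSupport {σ : Type*} [Fintype σ] (φ : ℝ × ℝ × ℝ → σ → ℝ)
    (k : ℕ) (s : Set (σ →₀ ℕ)) :
    (restrictSupport ℝ s).map (weightedEval φ k) =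
      Submodule.span ℝ ((fun d p => (∏ i, φ p i ^ d i) / (1 + p.2.2) ^ k) '' s) := by
  rw [restrictSupport_eq_span, Submodule.map_span, Set.image_image]
  simp [weightedEval, eval_monomial, Finsupp.prod_fintype]

theorem mem_Qsp_iff {l m n : ℤ} {k : ℕ} {f : ℝ × ℝ × ℝ → ℝ} :
    f ∈ Qsp l m n k ↔ ∃ P : MvPolynomial (Fin 3) ℝ,
      (∀ d ∈ P.support, (d 0 : ℤ) ≤ l ∧ (d 1 : ℤ) ≤ m ∧ (d 2 : ℤ) ≤ n) ∧
      weightedEval (fun p => ![p.1, p.2.1, p.2.2]) k P = f := by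
  suffices h : Qsp l m n k =
      (restrictSupport ℝ {d : Fin 3 →₀ ℕ | (d 0 : ℤ) ≤ l ∧ (d 1 : ℤ) ≤ m ∧ (d 2 : ℤ) ≤ n}).map
        (weightedEval (fun p => ![p.1, p.2.1, p.2.2]) k) by
    rw [h]; rfl
  rw [map_weightedEval_restrictSupport, Qsp]
  congr 1
  ext f
  constructor
  · rintro ⟨a, b, c, ha, hb, hc, rfl⟩
    refine ⟨Finsupp.equivFunOnFinite.symm ![a, b, c], ⟨ha, hb, hc⟩, ?_⟩
    ext p
    simp [qmon, Fin.prod_univ_three]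
  · rintro ⟨d, ⟨ha, hb, hc⟩, rfl⟩
    refine ⟨d 0, d 1, d 2, ha, hb, hc, ?_⟩
    ext p
    simp [qmon, Fin.prod_univ_three]

theorem mem_Qsp_zero_iff {l m : ℤ} {k : ℕ} {f : ℝ × ℝ × ℝ → ℝ} :
    f ∈ Qsp l m 0 k ↔ ∃ P : MvPolynomial (Fin 2) ℝ,
      (∀ d ∈ P.support, (d 0 : ℤ) ≤ l ∧ (d 1 : ℤ) ≤ m) ∧
      weightedEval (fun p => ![p.1, p.2.1]) k P = f := by
  suffices h : Qsp l m 0 k =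
      (restrictSupport ℝ {d : Fin 2 →₀ ℕ | (d 0 : ℤ) ≤ l ∧ (d 1 : ℤ) ≤ m}).map
        (weightedEval (fun p => ![p.1, p.2.1]) k) by
    rw [h]; rfl
  rw [map_weightedEval_restrictSupport, Qsp]
  congr 1
  ext f
  constructor
  · rintro ⟨a, b, c, ha, hb, hc, rfl⟩
    obtain rfl : c = 0 := by omega
    refine ⟨Finsupp.equivFunOnFinite.symm ![a, b], ⟨ha, hb⟩, ?_⟩
    ext p
    simp [qmon]
  · rintro ⟨d, ⟨ha, hb⟩, rfl⟩
    refine ⟨d 0, d 1, 0, ha, hb, le_rfl, ?_⟩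
    ext p
    simp [qmon]

theorem qmon_mem_Qsp {l m n : ℤ} {a b c : ℕ} (ha : (a : ℤ) ≤ l) (hb : (b : ℤ) ≤ m)
    (hc : (c : ℤ) ≤ n) (k : ℕ) : qmon k a b c ∈ Qsp l m n k :=
  Submodule.subset_span ⟨a, b, c, ha, hb, hc, rfl⟩

theorem bubQ_add (v w : ℝ × ℝ × ℝ → ℝ) : bubQ (v + w) = bubQ v + bubQ w := by
  funext p; simp [bubQ, mul_add]

theorem bubQ_smul (r : ℝ) (v : ℝ × ℝ × ℝ → ℝ) : bubQ (r • v) = r • bubQ v := by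
  funext p; simp [bubQ, mul_left_comm]

theorem differentiableAt_bubQ {l m n : ℤ} {k : ℕ} {v : ℝ × ℝ × ℝ → ℝ}
    (hv : v ∈ Qsp l m n k) {p : ℝ × ℝ × ℝ} (hp : p ∈ PyrInfInt) :
    DifferentiableAt ℝ (bubQ v) p := by
  suffices h : DifferentiableAt ℝ v p by unfold bubQ; fun_prop
  induction hv using Submodule.span_induction with
  | mem _ h =>
    obtain ⟨a, b, c, -, -, -, rfl⟩ := h
    have hz : (1 + p.2.2) ^ k ≠ 0 := (pow_pos (add_pos one_pos hp.2.2.2.2) k).ne'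
    unfold qmon
    fun_prop (disch := assumption)
  | zero => exact differentiableAt_const _
  | add _ _ _ _ hx hy => exact hx.add hy
  | smul r _ _ hx => exact hx.const_smul r

/-- The gradients of the bubbles `q ∈ U^{(0),k}_0(Ω∞)`, as a linear map in `v`. Fields live on
the subtype `Ω∞°` because `fderiv` is only additive where the bubbles are differentiable. -/
def gradBubble (l m n : ℤ) (k : ℕ) : Qsp l m n k →ₗ[ℝ] (PyrInfInt → ℝ × ℝ × ℝ) where
  toFun v p := grad3 (bubQ v) p
  map_add' v w := by
    ext1 p
    simp [bubQ_add, grad3_add (differentiableAt_bubQ v.2 p.2) (differentiableAt_bubQ w.2 p.2)]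
  map_smul' r v := by
    ext1 p
    simp [bubQ_smul, grad3_const_smul (differentiableAt_bubQ v.2 p.2)]

/-- The field `(y(1−y)z·q₁, x(1−x)z·q₂, x(1−x)y(1−y)·q₃)` on `Ω∞°`. -/
def bubbleField : ((ℝ × ℝ × ℝ → ℝ) × (ℝ × ℝ × ℝ → ℝ) × (ℝ × ℝ × ℝ → ℝ)) →ₗ[ℝ]
    (PyrInfInt → ℝ × ℝ × ℝ) where
  toFun q p :=
    (p.1.2.1 * (1 - p.1.2.1) * p.1.2.2 * q.1 p,
     p.1.1 * (1 - p.1.1) * p.1.2.2 * q.2.1 p,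
     p.1.1 * (1 - p.1.1) * p.1.2.1 * (1 - p.1.2.1) * q.2.2 p)
  map_add' q q' := by ext p <;> simp [mul_add]
  map_smul' r q := by ext p <;> simp [mul_left_comm]

/-- The field `(0, 0, x(1−x)y(1−y)·q)` on `Ω∞°`. -/
def verticalField : (ℝ × ℝ × ℝ → ℝ) →ₗ[ℝ] (PyrInfInt → ℝ × ℝ × ℝ) :=
  bubbleField ∘ₗ LinearMap.inr ℝ _ _ ∘ₗ LinearMap.inr ℝ _ _

/-- The field `specialGrad k (bub2 ρ)` on `Ω∞°`, as a linear map in `ρ`. -/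
def specialField (k : ℕ) : MvPolynomial (Fin 2) ℝ →ₗ[ℝ] (PyrInfInt → ℝ × ℝ × ℝ) where
  toFun ρ p := specialGrad k (bub2 ρ) p
  map_add' ρ ρ' := by
    have hbub : bub2 (ρ + ρ') = bub2 ρ + bub2 ρ' := mul_add _ _ _
    ext p <;> simp only [specialGrad, hbub, map_add, Pi.add_apply, Prod.mk_add_mk] <;> ring
  map_smul' r ρ := by
    have hbub : bub2 (r • ρ) = r • bub2 ρ := mul_smul_comm _ _ _
    ext p <;>
      simp only [specialGrad, hbub, Derivation.map_smul, smul_eval, Pi.smul_apply, Prod.smul_mk,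
        smul_eq_mul, RingHom.id_apply] <;>
      ring

/-- The space `U^{(1)}_{0,curl}(Ω∞)` with anisotropic degrees `l`, `m`, `n`; the case
`l = m = n = k - 2` is the space of the paper. Independence of `ρ` from `z` is degree `0` in `z`. -/
def curlSpace (l m n : ℤ) (k : ℕ) : Submodule ℝ (PyrInfInt → ℝ × ℝ × ℝ) :=
  ((Qsp (l + 1) m n (k + 1)).prod
    ((Qsp l (m + 1) n (k + 1)).prod (Qsp l m 0 (k + 1)))).map bubbleField

theorem mem_curlSpace_iff {k : ℕ} {w : PyrInfInt → ℝ × ℝ × ℝ} :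
    w ∈ curlSpace ((k : ℤ) - 2) ((k : ℤ) - 2) ((k : ℤ) - 2) k ↔
      ∃ (p₁ p₂ : MvPolynomial (Fin 3) ℝ) (ρ : MvPolynomial (Fin 2) ℝ),
        U1curlBounds k p₁ p₂ ρ ∧ ∀ p, w p = U1curlFun k p₁ p₂ ρ p := by
  have hk : (k : ℤ) - 2 + 1 = k - 1 := by ring
  have hfield (p₁ p₂ : MvPolynomial (Fin 3) ℝ) (ρ : MvPolynomial (Fin 2) ℝ) (p : PyrInfInt) :
      bubbleField (weightedEval (fun p => ![p.1, p.2.1, p.2.2]) (k + 1) p₁,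
        weightedEval (fun p => ![p.1, p.2.1, p.2.2]) (k + 1) p₂,
        weightedEval (fun p => ![p.1, p.2.1]) (k + 1) ρ) p = U1curlFun k p₁ p₂ ρ p := by
    simp [bubbleField, weightedEval, U1curlFun, mul_div_assoc]
  constructor
  · rintro ⟨⟨_, _, _⟩, ⟨h₁, h₂, h₃⟩, rfl⟩
    obtain ⟨p₁, hp₁, rfl⟩ := mem_Qsp_iff.mp h₁
    obtain ⟨p₂, hp₂, rfl⟩ := mem_Qsp_iff.mp h₂
    obtain ⟨ρ, hρ, rfl⟩ := mem_Qsp_zero_iff.mp h₃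
    rw [hk] at hp₁ hp₂
    exact ⟨p₁, p₂, ρ, ⟨hp₁, hp₂, hρ⟩, hfield p₁ p₂ ρ⟩
  · rintro ⟨p₁, p₂, ρ, ⟨hp₁, hp₂, hρ⟩, hw⟩
    rw [← hk] at hp₁ hp₂
    exact ⟨_, ⟨mem_Qsp_iff.mpr ⟨p₁, hp₁, rfl⟩, mem_Qsp_iff.mpr ⟨p₂, hp₂, rfl⟩,
      mem_Qsp_zero_iff.mpr ⟨ρ, hρ, rfl⟩⟩, funext fun p => (hfield p₁ p₂ ρ p).trans (hw p).symm⟩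

/-- The horizontal gradient `(∂/∂x, ∂/∂y, 0)` of `x(1−x)y(1−y)x^a y^b`, times
`z^{c+1}/(1+z)^{k+1}`. -/
def horizontalGrad (k a b c : ℕ) : PyrInfInt → ℝ × ℝ × ℝ :=
  bubbleField
    (((a : ℝ) + 1) • qmon (k + 1) a b c - ((a : ℝ) + 2) • qmon (k + 1) (a + 1) b c,
     ((b : ℝ) + 1) • qmon (k + 1) a b c - ((b : ℝ) + 2) • qmon (k + 1) a (b + 1) c, 0)

theorem hasDerivAt_mul_one_sub_mul_pow (a : ℕ) (x : ℝ) :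
    HasDerivAt (fun t : ℝ => t * (1 - t) * t ^ a)
      ((a + 1) * x ^ a - (a + 2) * x ^ (a + 1)) x := by
  have h : (fun t : ℝ => t * (1 - t) * t ^ a) = fun t => t ^ (a + 1) - t ^ (a + 2) := by
    ext t; ring
  rw [h]
  exact ((hasDerivAt_pow (a + 1) x).fun_sub (hasDerivAt_pow (a + 2) x)).congr_deriv
    (by push_cast; simp)

theorem hasDerivAt_mul_pow_div_one_add_pow (k c : ℕ) {z : ℝ} (hz : 1 + z ≠ 0) :
    HasDerivAt (fun t : ℝ => t * (t ^ c / (1 + t) ^ k))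
      (((c + 1) * z ^ c + (c + 1 - k) * z ^ (c + 1)) / (1 + z) ^ (k + 1)) z := by
  have h : (fun t : ℝ => t * (t ^ c / (1 + t) ^ k)) = fun t => t ^ (c + 1) / (1 + t) ^ k := by
    ext t; ring
  rw [h]
  refine ((hasDerivAt_pow (c + 1) z).fun_div
    (((hasDerivAt_id' z).const_add 1).fun_pow k) (pow_ne_zero k hz)).congr_deriv ?_
  rcases k with _ | k
  · simp only [Nat.cast_add, Nat.cast_one, add_tsub_cancel_right, Nat.cast_zero]
    field_simp
    ring
  · simp only [Nat.cast_add, Nat.cast_one, add_tsub_cancel_right, mul_one]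
    field_simp
    ring

theorem gradBubble_qmon {l m n : ℤ} {k a b c : ℕ} (h : qmon k a b c ∈ Qsp l m n k) :
    gradBubble l m n k ⟨_, h⟩ =
      horizontalGrad k a b c + horizontalGrad k a b (c + 1) +
        (((c : ℝ) + 1) • verticalField (qmon (k + 1) a b c) +
          ((c : ℝ) + 1 - k) • verticalField (qmon (k + 1) a b (c + 1))) := by
  funext ⟨p, hp⟩
  have hz : 1 + p.2.2 ≠ 0 := (add_pos one_pos hp.2.2.2.2).ne'
  have hx := (hasDerivAt_mul_one_sub_mul_pow a p.1).mul_const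
    (p.2.1 * (1 - p.2.1) * p.2.1 ^ b * (p.2.2 * (p.2.2 ^ c / (1 + p.2.2) ^ k)))
  have hy := (hasDerivAt_mul_one_sub_mul_pow b p.2.1).mul_const
    (p.1 * (1 - p.1) * p.1 ^ a * (p.2.2 * (p.2.2 ^ c / (1 + p.2.2) ^ k)))
  have hz' := (hasDerivAt_mul_pow_div_one_add_pow k c hz).mul_const
    (p.1 * (1 - p.1) * p.1 ^ a * (p.2.1 * (1 - p.2.1) * p.2.1 ^ b))
  refine (grad3_eq_of_hasDerivAt (differentiableAt_bubQ h hp)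
    (hx.congr_of_eventuallyEq (.of_forall fun t => ?_))
    (hy.congr_of_eventuallyEq (.of_forall fun t => ?_))
    (hz'.congr_of_eventuallyEq (.of_forall fun t => ?_))).trans ?_
  iterate 3 · simp only [bubQ, qmon]; ring
  ext <;>
    simp only [horizontalGrad, verticalField, bubbleField, qmon, LinearMap.coe_mk, AddHom.coe_mk,
      LinearMap.coe_comp, LinearMap.coe_inr, Function.comp_apply, Pi.add_apply, Pi.sub_apply,
      Pi.smul_apply, Pi.zero_apply, Prod.mk_add_mk, Prod.smul_mk, smul_eq_mul, mul_zero,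
      add_zero, zero_add] <;>
    field_simp <;>
    ring

theorem specialField_X_pow_mul_X_pow (a b c : ℕ) :
    specialField (c + 2) (X 0 ^ a * X 1 ^ b) =
      horizontalGrad (c + 2) a b (c + 1) - verticalField (qmon (c + 3) a b (c + 1)) := by
  have hbub : bub2 (X 0 ^ a * X 1 ^ b) =
      (X 0 ^ (a + 1) - X 0 ^ (a + 2)) * (X 1 ^ (b + 1) - X 1 ^ (b + 2)) := by
    simp only [bub2]; ring
  have hx (x y : ℝ) : eval ![x, y] (pderiv 0 (bub2 (X 0 ^ a * X 1 ^ b))) =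
      ((a + 1) * x ^ a - (a + 2) * x ^ (a + 1)) * (y ^ (b + 1) - y ^ (b + 2)) := by
    simp [hbub, Derivation.leibniz, Derivation.leibniz_pow, pderiv_X, mul_comm]
  have hy (x y : ℝ) : eval ![x, y] (pderiv 1 (bub2 (X 0 ^ a * X 1 ^ b))) =
      (x ^ (a + 1) - x ^ (a + 2)) * ((b + 1) * y ^ b - (b + 2) * y ^ (b + 1)) := by
    simp [hbub, Derivation.leibniz, Derivation.leibniz_pow, pderiv_X]
  have hval (x y : ℝ) : eval ![x, y] (bub2 (X 0 ^ a * X 1 ^ b)) =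
      (x ^ (a + 1) - x ^ (a + 2)) * (y ^ (b + 1) - y ^ (b + 2)) := by
    simp [hbub]
  ext p <;>
  · simp only [horizontalGrad, verticalField, bubbleField, qmon, specialField, specialGrad, hx, hy,
      hval, LinearMap.coe_mk, AddHom.coe_mk, LinearMap.coe_comp, LinearMap.coe_inr,
      Function.comp_apply, Pi.sub_apply, Pi.smul_apply, Pi.zero_apply, Prod.mk_sub_mk, smul_eq_mul,
      mul_zero, Nat.add_one_sub_one]
    ring

theorem horizontalGrad_mem_curlSpace {l m n : ℤ} {k a b c : ℕ} (ha : (a : ℤ) ≤ l)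
    (hb : (b : ℤ) ≤ m) (hc : (c : ℤ) ≤ n) : horizontalGrad k a b c ∈ curlSpace l m n k := by
  refine Submodule.mem_map_of_mem ⟨sub_mem (Submodule.smul_mem _ _ ?_) (Submodule.smul_mem _ _ ?_),
    sub_mem (Submodule.smul_mem _ _ ?_) (Submodule.smul_mem _ _ ?_), zero_mem _⟩ <;>
  exact qmon_mem_Qsp (by push_cast; omega) (by push_cast; omega) hc _

/-- The sum `∇U^{(0)}_0(Ω∞) + U^{(1)}_{0,curl}(Ω∞)` of the two spaces of the decomposition. -/
def gradAddCurl (l m n : ℤ) (k : ℕ) : Submodule ℝ (PyrInfInt → ℝ × ℝ × ℝ) :=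
  LinearMap.range (gradBubble l m n k) ⊔ curlSpace l m n k

section Existence

variable {l m n : ℤ} {k : ℕ}

theorem verticalField_qmon_mem_gradAddCurl (hn : n < k) {a b c : ℕ} (ha : (a : ℤ) ≤ l)
    (hb : (b : ℤ) ≤ m) (hc : (c : ℤ) ≤ n) :
    verticalField (qmon (k + 1) a b c) ∈ gradAddCurl l m n k := by
  induction c with
  | zero =>
    exact Submodule.mem_sup_right (Submodule.mem_map_of_mem
      ⟨zero_mem _, zero_mem _, qmon_mem_Qsp ha hb le_rfl _⟩)
  | succ c ih =>
    have hc' : (c : ℤ) ≤ n := by omega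
    have hne : (c : ℝ) + 1 - k ≠ 0 := sub_ne_zero.mpr (by norm_cast; omega)
    have hmon := qmon_mem_Qsp ha hb hc' k
    have hgrad : gradBubble l m n k ⟨_, hmon⟩ ∈ gradAddCurl l m n k :=
      Submodule.mem_sup_left ⟨_, rfl⟩
    have hhor : horizontalGrad k a b c + horizontalGrad k a b (c + 1) ∈ gradAddCurl l m n k :=
      Submodule.mem_sup_right (add_mem (horizontalGrad_mem_curlSpace ha hb hc')
        (horizontalGrad_mem_curlSpace ha hb hc))
    rwa [gradBubble_qmon, Submodule.add_mem_iff_right _ hhor,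
      Submodule.add_mem_iff_right _ (Submodule.smul_mem _ _ (ih hc')),
      Submodule.smul_mem_iff _ hne] at hgrad

theorem bubbleField_mem_gradAddCurl (hn : n < k) {q₁ q₂ q₃ : ℝ × ℝ × ℝ → ℝ}
    (hq₁ : q₁ ∈ Qsp (l + 1) m n (k + 1)) (hq₂ : q₂ ∈ Qsp l (m + 1) n (k + 1))
    (hq₃ : q₃ ∈ Qsp l m n (k + 1)) : bubbleField (q₁, q₂, q₃) ∈ gradAddCurl l m n k := by
  have hver : Qsp l m n (k + 1) ≤ (gradAddCurl l m n k).comap verticalField := by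
    refine Submodule.span_le.mpr ?_
    rintro _ ⟨a, b, c, ha, hb, hc, rfl⟩
    exact verticalField_qmon_mem_gradAddCurl hn ha hb hc
  have hhor : bubbleField (q₁, q₂, 0) ∈ gradAddCurl l m n k :=
    Submodule.mem_sup_right (Submodule.mem_map_of_mem ⟨hq₁, hq₂, zero_mem _⟩)
  have hsplit : bubbleField (q₁, q₂, q₃) = bubbleField (q₁, q₂, 0) + verticalField q₃ := by
    simp [verticalField, ← map_add]
  exact hsplit ▸ add_mem hhor (hver hq₃)

theorem specialField_X_pow_mul_X_pow_mem_gradAddCurl {a b : ℕ} (ha : (a : ℤ) ≤ l) (hb : (b : ℤ) ≤ m)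
    (hk : 2 ≤ k) :
    specialField k (X 0 ^ a * X 1 ^ b) ∈ gradAddCurl l m ((k : ℤ) - 2) k := by
  obtain ⟨c, rfl⟩ := Nat.exists_eq_add_of_le' hk
  have hn : ((c + 2 : ℕ) : ℤ) - 2 = c := by push_cast; ring
  rw [hn]
  have hmon := qmon_mem_Qsp ha hb (le_refl (c : ℤ)) (c + 2)
  have hspecial : specialField (c + 2) (X 0 ^ a * X 1 ^ b) = gradBubble l m c (c + 2) ⟨_, hmon⟩ -
      horizontalGrad (c + 2) a b c - ((c : ℝ) + 1) • verticalField (qmon (c + 3) a b c) := by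
    rw [gradBubble_qmon, specialField_X_pow_mul_X_pow]
    push_cast
    module
  rw [hspecial]
  exact sub_mem (sub_mem (Submodule.mem_sup_left ⟨_, rfl⟩)
    (Submodule.mem_sup_right (horizontalGrad_mem_curlSpace ha hb le_rfl)))
    (Submodule.smul_mem _ _ (verticalField_qmon_mem_gradAddCurl (by omega) ha hb le_rfl))

theorem specialField_mem_gradAddCurl {ρ : MvPolynomial (Fin 2) ℝ}
    (hρ : ∀ d ∈ ρ.support, (d 0 : ℤ) ≤ (k : ℤ) - 2 ∧ (d 1 : ℤ) ≤ (k : ℤ) - 2) :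
    specialField k ρ ∈ gradAddCurl ((k : ℤ) - 2) ((k : ℤ) - 2) ((k : ℤ) - 2) k := by
  rw [ρ.as_sum, map_sum]
  refine Submodule.sum_mem _ fun d hd => ?_
  obtain ⟨h₀, h₁⟩ := hρ d hd
  have hmonomial : monomial d (ρ.coeff d) = ρ.coeff d • (X 0 ^ d 0 * X 1 ^ d 1) := by
    rw [monomial_eq, Finsupp.prod_fintype _ _ (by simp), Fin.prod_univ_two, smul_eq_C_mul]
  rw [hmonomial, map_smul]
  exact Submodule.smul_mem _ _ (specialField_X_pow_mul_X_pow_mem_gradAddCurl h₀ h₁ (by omega))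

end Existence

section Uniqueness

theorem eq_zero_of_hasDerivAt_eval_div_zero {M : Polynomial ℝ} {k : ℕ} (hM : M.natDegree < k)
    (h : ∀ z, 0 < z → HasDerivAt (fun t => M.eval t / (1 + t) ^ k) 0 z) : M = 0 := by
  obtain ⟨a, ha⟩ : ∃ a, ∀ z ∈ Set.Ioi (0 : ℝ), M.eval z / (1 + z) ^ k = a :=
    isOpen_Ioi.exists_is_const_of_deriv_eq_zero isPreconnected_Ioi
      (fun z hz => (h z hz).differentiableAt.differentiableWithinAt) fun z hz => (h z hz).deriv
  have hMa : M = Polynomial.C a * (Polynomial.X + Polynomial.C 1) ^ k := by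
    refine Polynomial.eq_of_infinite_eval_eq _ _ ((Set.Ioi_infinite (0 : ℝ)).mono fun z hz => ?_)
    have hz₁ : (1 + z) ^ k ≠ 0 := (pow_pos (add_pos one_pos hz) k).ne'
    simpa [add_comm z] using (div_eq_iff hz₁).mp (ha z hz)
  have ha₀ : a = 0 := by
    by_contra ha₀
    rw [hMa, Polynomial.natDegree_C_mul ha₀, Polynomial.natDegree_pow_X_add_C] at hM
    exact hM.false
  simp [hMa, ha₀]

theorem eq_zero_of_hasDerivAt_mul_eval_div {P : Polynomial ℝ} {d k : ℕ} {c : ℝ}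
    (hP : P ∈ Polynomial.degreeLT ℝ d) (hd : d < k)
    (h : ∀ z, 0 < z → HasDerivAt (fun t => t * P.eval t / (1 + t) ^ k) (c / (1 + z) ^ (k + 1)) z) :
    P = 0 := by
  have hk : (k : ℝ) ≠ 0 := by norm_cast; omega
  have hdeg : (Polynomial.X * P + Polynomial.C (c / k)).natDegree < k := by
    rw [Polynomial.natDegree_add_C]
    rcases eq_or_ne P 0 with rfl | hP₀
    · simpa using Nat.zero_lt_of_lt hd
    · rw [Polynomial.natDegree_X_mul hP₀]
      have hPd := (Polynomial.natDegree_lt_iff_degree_lt hP₀).mpr (Polynomial.mem_degreeLT.mp hP)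
      omega
  have hM : Polynomial.X * P + Polynomial.C (c / k) = 0 := by
    refine eq_zero_of_hasDerivAt_eval_div_zero hdeg fun z hz => ?_
    have hz₁ : 1 + z ≠ 0 := (add_pos one_pos hz).ne'
    have hconst := (hasDerivAt_const z (c / k)).fun_div
      (((hasDerivAt_id' z).const_add 1).fun_pow k) (pow_ne_zero k hz₁)
    have hsum := (h z hz).fun_add hconst
    simp only [Polynomial.eval_add, Polynomial.eval_mul, Polynomial.eval_X, Polynomial.eval_C,
      add_div]
    refine hsum.congr_deriv ?_
    obtain ⟨j, rfl⟩ := Nat.exists_eq_add_one_of_ne_zero (Nat.ne_zero_of_lt hd)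
    simp only [Nat.cast_add, Nat.cast_one, zero_mul, add_tsub_cancel_right, mul_one,
      zero_sub] at hk ⊢
    field_simp
    ring
  have hc : c / k = 0 := by simpa using congr_arg (Polynomial.eval 0) hM
  simpa [hc] using hM

theorem exists_polynomial_slice {l m n : ℤ} {k : ℕ} {v : ℝ × ℝ × ℝ → ℝ} (hv : v ∈ Qsp l m n k)
    (x y : ℝ) :
    ∃ P ∈ Polynomial.degreeLT ℝ (n + 1).toNat, ∀ z, v (x, y, z) = P.eval z / (1 + z) ^ k := by
  induction hv using Submodule.span_induction with
  | mem _ h =>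
    obtain ⟨a, b, c, -, -, hc, rfl⟩ := h
    refine ⟨Polynomial.C (x ^ a * y ^ b) * Polynomial.X ^ c, ?_, fun z => by simp [qmon]⟩
    rw [Polynomial.mem_degreeLT]
    refine (Polynomial.degree_C_mul_X_pow_le _ _).trans_lt ?_
    norm_cast
    omega
  | zero => exact ⟨0, zero_mem _, by simp⟩
  | add _ _ _ _ hf hg =>
    obtain ⟨P, hP, hfP⟩ := hf
    obtain ⟨Q, hQ, hgQ⟩ := hg
    exact ⟨P + Q, add_mem hP hQ, fun z => by simp [hfP, hgQ, add_div]⟩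
  | smul r _ _ hf =>
    obtain ⟨P, hP, hfP⟩ := hf
    exact ⟨r • P, Submodule.smul_mem _ r hP, fun z => by simp [hfP, mul_div_assoc]⟩

theorem bubQ_eq_zero_of_gradBubble_mem_curlSpace {l m n : ℤ} {k : ℕ} (hk : 0 < k) (hn : n + 1 < k)
    {v : Qsp l m n k} (hv : gradBubble l m n k v ∈ curlSpace l m n k) :
    Set.EqOn (bubQ v) 0 PyrInfInt := by
  rintro ⟨x, y, z⟩ ⟨hx₀, hx₁, hy₀, hy₁, -⟩
  obtain ⟨⟨q₁, q₂, q₃⟩, ⟨-, -, hq₃⟩, hgrad⟩ := hv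
  obtain ⟨P, hP, hvP⟩ := exists_polynomial_slice v.2 x y
  obtain ⟨Q, hQ, hqQ⟩ := exists_polynomial_slice hq₃ x y
  obtain ⟨c, rfl⟩ : ∃ c, Q = Polynomial.C c :=
    ⟨_, Polynomial.eq_C_of_degree_le_zero (Order.lt_succ_iff.mp (Polynomial.mem_degreeLT.mp hQ))⟩
  have hbubble : x * (1 - x) * y * (1 - y) ≠ 0 :=
    (mul_pos (mul_pos (mul_pos hx₀ (sub_pos.mpr hx₁)) hy₀) (sub_pos.mpr hy₁)).ne'
  have hd : (n + 1).toNat < k := by omega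
  have hP₀ : P = 0 := by
    refine eq_zero_of_hasDerivAt_mul_eval_div (c := c) hP hd fun t ht => ?_
    have ht' : (x, y, t) ∈ PyrInfInt := ⟨hx₀, hx₁, hy₀, hy₁, ht⟩
    have hderiv := hasDerivAt_grad3_thd (differentiableAt_bubQ v.2 ht')
    have hthd : (grad3 (bubQ v) (x, y, t)).2.2 =
        x * (1 - x) * y * (1 - y) * (c / (1 + t) ^ (k + 1)) := by
      rw [← Polynomial.eval_C (a := c) (x := t), ← hqQ t]
      exact congr_arg (·.2.2) (congr_fun hgrad ⟨_, ht'⟩).symm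
    rw [hthd] at hderiv
    refine ((hderiv.const_mul (x * (1 - x) * y * (1 - y))⁻¹).congr_deriv
      (inv_mul_cancel_left₀ hbubble _)).congr_of_eventuallyEq (.of_forall fun s => ?_)
    rw [eq_inv_mul_iff_mul_eq₀ hbubble]
    simp only [bubQ, hvP]
    ring
  simp [bubQ, hvP, hP₀]

theorem eqOn_bubQ_and_eq_of_gradBubble_add_eq {l m n : ℤ} {k : ℕ} (hk : 0 < k) (hn : n + 1 < k)
    {v v' : Qsp l m n k} {w w' : PyrInfInt → ℝ × ℝ × ℝ} (hw : w ∈ curlSpace l m n k)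
    (hw' : w' ∈ curlSpace l m n k) (h : gradBubble l m n k v + w = gradBubble l m n k v' + w') :
    Set.EqOn (bubQ v) (bubQ v') PyrInfInt ∧ w = w' := by
  have hsub : gradBubble l m n k (v - v') = w' - w := by
    rw [map_sub, sub_eq_sub_iff_add_eq_add, h, add_comm]
  have hzero : Set.EqOn (bubQ (v - v' : Qsp l m n k)) 0 PyrInfInt :=
    bubQ_eq_zero_of_gradBubble_mem_curlSpace hk hn (hsub ▸ sub_mem hw' hw)
  have hgrad : gradBubble l m n k (v - v') = 0 :=
    funext fun p => grad3_eq_zero_of_eqOn isOpen_PyrInfInt p.2 hzero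
  refine ⟨fun p hp => sub_eq_zero.mp ?_, (sub_eq_zero.mp (hsub ▸ hgrad)).symm⟩
  rw [← Pi.zero_apply (M := fun _ => ℝ) p, ← hzero hp]
  simp [bubQ, mul_sub]

end Uniqueness

/-- every `u ∈ U^{(1),k}_0(Ω∞)` can be written, uniquely, as `u = ∇q + w`
on `Ω∞°` with `q = x(1−x)y(1−y)z·v ∈ U^{(0),k}_0(Ω∞)` (`v ∈ Q^{k−2,k−2,k−2}_k`) and
`w ∈ U^{(1),k}_{0,curl}(Ω∞)`. -/
theorem U1zero_helmholtz_decomposition (k : ℕ) (hk : 1 ≤ k)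
    (q₁ q₂ q₃ : (ℝ × ℝ × ℝ) → ℝ)
    (hq₁ : q₁ ∈ Qsp ((k : ℤ) - 1) ((k : ℤ) - 2) ((k : ℤ) - 2) (k + 1))
    (hq₂ : q₂ ∈ Qsp ((k : ℤ) - 2) ((k : ℤ) - 1) ((k : ℤ) - 2) (k + 1))
    (hq₃ : q₃ ∈ Qsp ((k : ℤ) - 2) ((k : ℤ) - 2) ((k : ℤ) - 2) (k + 1))
    (ρ : MvPolynomial (Fin 2) ℝ)
    (hρ : ∀ d ∈ ρ.support, (d 0 : ℤ) ≤ (k : ℤ) - 2 ∧ (d 1 : ℤ) ≤ (k : ℤ) - 2) :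
    (∃ v ∈ Qsp ((k : ℤ) - 2) ((k : ℤ) - 2) ((k : ℤ) - 2) k,
     ∃ p₁ p₂ : MvPolynomial (Fin 3) ℝ, ∃ ρ' : MvPolynomial (Fin 2) ℝ,
       U1curlBounds k p₁ p₂ ρ' ∧
       ∀ p ∈ PyrInfInt,
         U1zeroFun k q₁ q₂ q₃ ρ p = grad3 (bubQ v) p + U1curlFun k p₁ p₂ ρ' p) ∧
    (∀ v ∈ Qsp ((k : ℤ) - 2) ((k : ℤ) - 2) ((k : ℤ) - 2) k,
     ∀ v' ∈ Qsp ((k : ℤ) - 2) ((k : ℤ) - 2) ((k : ℤ) - 2) k,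
     ∀ p₁ p₂ p₁' p₂' : MvPolynomial (Fin 3) ℝ, ∀ ρ' ρ'' : MvPolynomial (Fin 2) ℝ,
       U1curlBounds k p₁ p₂ ρ' → U1curlBounds k p₁' p₂' ρ'' →
       (∀ p ∈ PyrInfInt,
         U1zeroFun k q₁ q₂ q₃ ρ p = grad3 (bubQ v) p + U1curlFun k p₁ p₂ ρ' p) →
       (∀ p ∈ PyrInfInt,
         U1zeroFun k q₁ q₂ q₃ ρ p = grad3 (bubQ v') p + U1curlFun k p₁' p₂' ρ'' p) →
       ∀ p ∈ PyrInfInt,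
         bubQ v p = bubQ v' p ∧ U1curlFun k p₁ p₂ ρ' p = U1curlFun k p₁' p₂' ρ'' p) := by
  rw [show (k : ℤ) - 1 = k - 2 + 1 by ring] at hq₁ hq₂
  constructor
  · have hu : bubbleField (q₁, q₂, q₃) + specialField k ρ ∈
        gradAddCurl ((k : ℤ) - 2) ((k : ℤ) - 2) ((k : ℤ) - 2) k :=
      add_mem (bubbleField_mem_gradAddCurl (by omega) hq₁ hq₂ hq₃) (specialField_mem_gradAddCurl hρ)
    obtain ⟨_, ⟨v, rfl⟩, w, hw, hsum⟩ := Submodule.mem_sup.mp hu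
    obtain ⟨p₁, p₂, ρ', hbounds, hw⟩ := mem_curlSpace_iff.mp hw
    refine ⟨v, v.2, p₁, p₂, ρ', hbounds, fun p hp => ?_⟩
    exact (congr_fun hsum ⟨p, hp⟩).symm.trans (congr_arg (grad3 (bubQ v) p + ·) (hw ⟨p, hp⟩))
  · intro v hv v' hv' p₁ p₂ p₁' p₂' ρ' ρ'' hbounds hbounds' h h' p hp
    have hw := mem_curlSpace_iff.mpr ⟨p₁, p₂, ρ', hbounds, fun _ => rfl⟩
    have hw' := mem_curlSpace_iff.mpr ⟨p₁', p₂', ρ'', hbounds', fun _ => rfl⟩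
    obtain ⟨hbub, hcurl⟩ := eqOn_bubQ_and_eq_of_gradBubble_add_eq (v := ⟨v, hv⟩) (v' := ⟨v', hv'⟩)
      hk (by omega) hw hw' (funext fun p => (h p p.2).symm.trans (h' p p.2))
    exact ⟨hbub hp, congr_fun hcurl ⟨p, hp⟩⟩

end
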